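/- arXiv:1705.01815 — 2 statements merged into one kernel-verified Lean document; each statement's English description precedes it below -/
import Mathlib

section
/- Let G = G(Γ, 𝔭) be a graph product of cyclic groups, g ∈ G, and let a, b₁, b₂, b₃, b₄ ∈ Γ be five distinct vertices such that a is not adjacent to any of b₁, b₂, b₃, b₄ and {b₁, b₂, b₃, b₄} ∩ sp(g) = ∅. Then for every n ≥ 2 the element g·a⁻¹b₁⁻¹b₂·a·b₃⁻¹b₄ has no n-th root in G. -/
def graphProdRels {V : Type} (Γ : SimpleGraph V) (𝔭 : V → ℕ) : Set (FreeGroup V) :=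
  {w | (∃ v, 𝔭 v ≠ 0 ∧ w = FreeGroup.of v ^ 𝔭 v) ∨
       (∃ a b, Γ.Adj a b ∧
         w = FreeGroup.of a * FreeGroup.of b * (FreeGroup.of a)⁻¹ * (FreeGroup.of b)⁻¹)}

def GraphProduct {V : Type} (Γ : SimpleGraph V) (𝔭 : V → ℕ) : Type :=
  PresentedGroup (graphProdRels Γ 𝔭)

instance {V : Type} (Γ : SimpleGraph V) (𝔭 : V → ℕ) : Group (GraphProduct Γ 𝔭) := by
  unfold GraphProduct; infer_instance

def GraphProduct.of {V : Type} {Γ : SimpleGraph V} {𝔭 : V → ℕ} (v : V) : GraphProduct Γ 𝔭 :=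
  PresentedGroup.of v

/-- The support of an element of a graph product: the smallest set of vertices `A` such that
`g` lies in the subgroup generated by the generators from `A`. -/
def GraphProduct.sp {V : Type} {Γ : SimpleGraph V} {𝔭 : V → ℕ} (g : GraphProduct Γ 𝔭) : Set V :=
  {v | ∀ A : Set V, g ∈ Subgroup.closure (GraphProduct.of '' A) → v ∈ A}

/-!
A homomorphism to a free product detects the missing root: send `a` to the left copy of `G`, send
`b₂` and `b₄` to the right copy, and kill every other vertex. As `b₂, b₄ ∉ sp g`, the element `g`
maps into the left copy, so `g a⁻¹ b₁⁻¹ b₂ a b₃⁻¹ b₄` maps to `p b₂ a b₄` for some `p` on the left.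
If `p = 1`, this is conjugate to the reduced word `a (b₄ b₂)`; otherwise it is a reduced word whose
two right letters differ. A reduced word whose ends lie in distinct factors is an `n`-th power only
if it is literally an `n`-fold repetition of a word with the same ends, which neither word is.
-/

section FreeProduct

open Monoid Monoid.CoprodI

variable {ι : Type*} {M : ι → Type*} [∀ i, Monoid (M i)] {i j k l : ι}

theorem neWord_toList_eq_of_prod_eq {v : NeWord M i j} {w : NeWord M k l}
    (h : v.prod = w.prod) : v.toList = w.toList := by
  classical
  exact congrArg Word.toList (Word.equiv.symm.injective h : v.toWord = w.toWord)

theorem neWord_ends_eq_of_prod_eq {v : NeWord M i j} {w : NeWord M k l}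
    (h : v.prod = w.prod) : i = k ∧ j = l := by
  have hlist := neWord_toList_eq_of_prod_eq h
  constructor
  · simpa using congrArg (Option.map Sigma.fst ∘ List.head?) hlist
  · simpa using congrArg (Option.map Sigma.fst ∘ List.getLast?) hlist

theorem neWord_prod_ne_one (w : NeWord M i j) : w.prod ≠ 1 := by
  classical
  intro h
  have hempty : w.toWord = Word.empty := Word.equiv.symm.injective (h.trans Word.prod_empty.symm)
  exact w.toList_ne_nil (congrArg Word.toList hempty)

theorem exists_neWord_prod_eq {x : CoprodI M} (hx : x ≠ 1) :
    ∃ (i j : ι) (w : NeWord M i j), w.prod = x := by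
  classical
  obtain ⟨w, rfl⟩ := (Word.equiv (M := M)).symm.surjective x
  obtain ⟨i, j, w', rfl⟩ := NeWord.of_word w (by rintro rfl; exact hx Word.prod_empty)
  exact ⟨i, j, w', rfl⟩

theorem neWord_two_le_length (w : NeWord M i j) (hij : i ≠ j) : 2 ≤ w.toList.length := by
  cases w with
  | singleton => exact absurd rfl hij
  | append w₁ _ w₂ =>
    have h₁ := List.length_pos_iff.2 w₁.toList_ne_nil
    have h₂ := List.length_pos_iff.2 w₂.toList_ne_nil
    simp only [NeWord.toList, List.length_append]
    lia

theorem neWord_head_ne_one (w : NeWord M i j) : w.head ≠ 1 := by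
  induction w with
  | singleton _ hs => exact hs
  | append _ _ _ ih _ => exact ih

theorem neWord_last_ne_one (w : NeWord M i j) : w.last ≠ 1 := by
  induction w with
  | singleton _ hs => exact hs
  | append _ _ _ _ ih => exact ih

theorem neWord_peel_head (w : NeWord M i j) :
    (i = j ∧ w.prod = of w.head) ∨
      ∃ (k : ι) (v : NeWord M k j), i ≠ k ∧ v.toList.length < w.toList.length ∧
        w.prod = of w.head * v.prod := by
  induction w with
  | singleton s hs => exact .inl ⟨rfl, NeWord.prod_singleton s hs⟩
  | append w₁ hne w₂ ih₁ _ =>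
    right
    rcases ih₁ with ⟨rfl, h⟩ | ⟨k, v, hk, hlen, h⟩
    · exact ⟨_, w₂, hne, by simpa using List.length_pos_iff.2 w₁.toList_ne_nil, by simp [h]⟩
    · exact ⟨k, v.append hne w₂, hk, by simpa using hlen, by simp [h, mul_assoc]⟩

theorem neWord_peel_last (w : NeWord M i j) :
    (i = j ∧ w.prod = of w.last) ∨
      ∃ (k : ι) (v : NeWord M i k), k ≠ j ∧ v.toList.length < w.toList.length ∧
        w.prod = v.prod * of w.last := by
  induction w with
  | singleton s hs => exact .inl ⟨rfl, NeWord.prod_singleton s hs⟩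
  | append w₁ hne w₂ _ ih₂ =>
    right
    rcases ih₂ with ⟨rfl, h⟩ | ⟨k, v, hk, hlen, h⟩
    · exact ⟨_, w₁, hne, by simpa using List.length_pos_iff.2 w₂.toList_ne_nil, by simp [h]⟩
    · exact ⟨k, w₁.append hne v, hk, by simpa using hlen, by simp [h, mul_assoc]⟩

theorem exists_neWord_replicate (w : NeWord M i j) (hij : i ≠ j) {n : ℕ} (hn : n ≠ 0) :
    ∃ v : NeWord M i j,
      v.prod = w.prod ^ n ∧ v.toList = (List.replicate n w.toList).flatten := by
  induction n, Nat.one_le_iff_ne_zero.2 hn using Nat.le_induction with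
  | base => exact ⟨w, by simp, by simp⟩
  | succ n hn₁ ih =>
    obtain ⟨v, hprod, hlist⟩ := ih (Nat.one_le_iff_ne_zero.1 hn₁)
    exact ⟨w.append hij.symm v, by simp [hprod, pow_succ'], by simp [hlist, List.replicate_succ]⟩

theorem exists_neWord_mul_of_pow (v : NeWord M i j) (hji : j ≠ i) {t : M i} (ht : t ≠ 1)
    (h : t * v.head ≠ 1) (m : ℕ) :
    ∃ w : NeWord M i i, w.prod = (v.prod * of t) ^ (m + 1) := by
  have hrotate : (v.prod * of t) ^ (m + 1) = v.prod * (v.mulHead t h).prod ^ m * of t := by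
    rw [NeWord.mulHead_prod, pow_succ, ← mul_assoc, mul_pow_mul]
  rcases eq_or_ne m 0 with rfl | hm
  · exact ⟨v.append hji (.singleton t ht), by simp⟩
  · obtain ⟨u, hu, -⟩ := exists_neWord_replicate (v.mulHead t h) hji.symm hm
    exact ⟨(v.append hji u).append hji (.singleton t ht), by simp [hu, hrotate]⟩

variable {G : ι → Type*} [∀ i, Group (G i)]

theorem exists_neWord_conj (u : NeWord G k l) (hik : i ≠ k) (hli : l ≠ i) {s : G i} (hs : s ≠ 1) :
    ∃ w : NeWord G i i, w.prod = of s * u.prod * (of s)⁻¹ :=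
  ⟨((NeWord.singleton s hs).append hik u).append hli (.singleton s⁻¹ (inv_ne_one.2 hs)), by simp⟩

/-- When both ends lie in the same factor, either they cancel, so that `w` is conjugate to a shorter
word, or rotating the last letter to the front gives a word with ends in distinct factors. -/
theorem exists_neWord_pow (w : NeWord G i j) {n : ℕ} (h : w.prod ^ n ≠ 1) :
    ∃ v : NeWord G i j, v.prod = w.prod ^ n := by
  obtain ⟨m, rfl⟩ : ∃ m, n = m + 1 :=
    Nat.exists_eq_succ_of_ne_zero (by rintro rfl; exact h (pow_zero _))
  induction hN : w.toList.length using Nat.strong_induction_on generalizing i j w with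
  | _ N ih =>
  rcases ne_or_eq i j with hij | rfl
  · obtain ⟨v, hv, -⟩ := exists_neWord_replicate w hij m.succ_ne_zero
    exact ⟨v, hv⟩
  rcases neWord_peel_last w with ⟨-, hw⟩ | ⟨l, v, hl, hlen, hw⟩
  · rw [hw, ← map_pow] at h ⊢
    exact ⟨.singleton _ fun h' => h (by rw [h', map_one]), NeWord.prod_singleton _ _⟩
  by_cases hcancel : w.last * v.head = 1
  · rcases neWord_peel_head v with ⟨hil, -⟩ | ⟨k, u, hk, hlen', hv⟩
    · exact absurd hil.symm hl
    have hconj : w.prod = of v.head * u.prod * (of v.head)⁻¹ := by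
      rw [hw, hv, eq_inv_of_mul_eq_one_left hcancel, map_inv]
    rw [hconj, conj_pow] at h ⊢
    obtain ⟨u', hu'⟩ := ih _ (hN ▸ hlen'.trans hlen) u (fun hu => h (by simp [hu])) rfl
    rw [← hu']
    exact exists_neWord_conj u' hk hl (neWord_head_ne_one v)
  · rw [hw]
    exact exists_neWord_mul_of_pow v hl (neWord_last_ne_one w) hcancel m

theorem exists_neWord_of_pow_eq (w : NeWord G i j) {n : ℕ} {x : CoprodI G} (hx : x ^ n = w.prod) :
    ∃ v : NeWord G i j, v.prod = x := by
  have hxn : x ^ n ≠ 1 := hx ▸ neWord_prod_ne_one w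
  obtain ⟨k, l, u, rfl⟩ := exists_neWord_prod_eq (x := x) (by rintro rfl; exact hxn (one_pow n))
  obtain ⟨v, hv⟩ := exists_neWord_pow u hxn
  obtain ⟨rfl, rfl⟩ := neWord_ends_eq_of_prod_eq (hv.trans hx)
  exact ⟨u, rfl⟩

theorem exists_toList_eq_flatten_replicate_of_pow_eq (w : NeWord G i j) (hij : i ≠ j) {n : ℕ}
    (hn : n ≠ 0) {x : CoprodI G} (hx : x ^ n = w.prod) :
    ∃ v : NeWord G i j, w.toList = (List.replicate n v.toList).flatten := by
  obtain ⟨v, rfl⟩ := exists_neWord_of_pow_eq w hx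
  obtain ⟨u, hprod, hlist⟩ := exists_neWord_replicate v hij hn
  exact ⟨v, (neWord_toList_eq_of_prod_eq (hprod.trans hx)).symm.trans hlist⟩

theorem pow_ne_of_mul_of (hij : i ≠ j) {p : G i} {q : G j} (hp : p ≠ 1) (hq : q ≠ 1) {n : ℕ}
    (hn : 2 ≤ n) (x : CoprodI G) : x ^ n ≠ of p * of q := by
  intro hx
  let w : NeWord G i j := (NeWord.singleton p hp).append hij (.singleton q hq)
  obtain ⟨v, hv⟩ := exists_toList_eq_flatten_replicate_of_pow_eq w hij (n := n) (x := x)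
    (by lia) (by simpa [w] using hx)
  have hlen : 2 = n * v.toList.length := by simpa [w] using congrArg List.length hv
  nlinarith [neWord_two_le_length v hij]

theorem pow_ne_of_mul_of_mul_of_mul_of_of_ne_one (hij : i ≠ j) {p r : G i} {q s : G j}
    (hp : p ≠ 1) (hq : q ≠ 1) (hr : r ≠ 1) (hs : s ≠ 1) (hqs : q ≠ s) {n : ℕ} (hn : 2 ≤ n)
    (x : CoprodI G) : x ^ n ≠ of p * of q * of r * of s := by
  intro hx
  let w : NeWord G i j := (((NeWord.singleton p hp).append hij (.singleton q hq)).append hij.symm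
    (.singleton r hr)).append hij (.singleton s hs)
  obtain ⟨v, hv⟩ := exists_toList_eq_flatten_replicate_of_pow_eq w hij (n := n) (x := x)
    (by lia) (by simpa [w] using hx)
  have hlen : 4 = n * v.toList.length := by simpa [w] using congrArg List.length hv
  have hlen₂ := neWord_two_le_length v hij
  obtain rfl : n = 2 := by nlinarith
  obtain ⟨y, z, hyz⟩ := List.length_eq_two.1 (show v.toList.length = 2 by lia)
  have hletters : [⟨i, p⟩, ⟨j, q⟩, ⟨i, r⟩, ⟨j, s⟩] = [y, z, y, z] := by
    simpa [w, hyz, List.replicate_succ] using hv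
  exact hqs (by grind)

theorem pow_ne_of_mul_of_mul_of_mul_of (hij : i ≠ j) (p : G i) {r : G i} {q s : G j}
    (hq : q ≠ 1) (hr : r ≠ 1) (hs : s ≠ 1) (hqs : q ≠ s) (hsq : s * q ≠ 1) {n : ℕ} (hn : 2 ≤ n)
    (x : CoprodI G) : x ^ n ≠ of p * of q * of r * of s := by
  rcases ne_or_eq p 1 with hp | rfl
  · exact pow_ne_of_mul_of_mul_of_mul_of_of_ne_one hij hp hq hr hs hqs hn x
  intro hx
  refine pow_ne_of_mul_of hij hr hsq hn ((of q)⁻¹ * x * (of q)⁻¹⁻¹) ?_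
  rw [conj_pow, hx]
  simp [mul_assoc]

end FreeProduct

namespace GraphProduct

variable {V : Type} {Γ : SimpleGraph V} {𝔭 : V → ℕ} {H : Type*} [Group H]

theorem of_pow (v : V) : (of v : GraphProduct Γ 𝔭) ^ 𝔭 v = 1 := by
  by_cases h : 𝔭 v = 0
  · rw [h, pow_zero]
  · exact PresentedGroup.one_of_mem (rels := graphProdRels Γ 𝔭) (.inl ⟨v, h, rfl⟩)

theorem commute_of {v w : V} (h : Γ.Adj v w) :
    Commute (of v : GraphProduct Γ 𝔭) (of w) :=
  commutatorElement_eq_one_iff_commute.1 <|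
    PresentedGroup.one_of_mem (rels := graphProdRels Γ 𝔭) (.inr ⟨v, w, h, rfl⟩)

/-- The universal property of graph products: images of the generators that satisfy the defining
relations extend to a homomorphism. -/
def lift (f : V → H) (hpow : ∀ v, f v ^ 𝔭 v = 1)
    (hcomm : ∀ v w, Γ.Adj v w → Commute (f v) (f w)) : GraphProduct Γ 𝔭 →* H :=
  PresentedGroup.toGroup (f := f) (rels := graphProdRels Γ 𝔭) <| by
    rintro r (⟨v, -, rfl⟩ | ⟨v, w, h, rfl⟩)
    · simpa using hpow v
    · simpa [commutatorElement_def] using commutatorElement_eq_one_iff_commute.2 (hcomm v w h)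

@[simp]
theorem lift_of (f : V → H) (hpow : ∀ v, f v ^ 𝔭 v = 1)
    (hcomm : ∀ v w, Γ.Adj v w → Commute (f v) (f w)) (v : V) : lift f hpow hcomm (of v) = f v :=
  PresentedGroup.toGroup.of _

theorem of_notMem_closure {S : Set V} {v : V} (hv : v ∉ S) (h𝔭 : 𝔭 v ≠ 1) :
    (of v : GraphProduct Γ 𝔭) ∉ Subgroup.closure (of '' S) := by
  classical
  let exponent : GraphProduct Γ 𝔭 →* Multiplicative (ZMod (𝔭 v)) :=
    lift (Pi.mulSingle v (.ofAdd 1))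
      (fun w => by
        rcases eq_or_ne w v with rfl | h
        · simp [← ofAdd_nsmul]
        · simp [h])
      (fun _ _ _ => .all _ _)
  have hle : Subgroup.closure (of '' S) ≤ exponent.ker := by
    rw [Subgroup.closure_le]
    rintro _ ⟨w, hw, rfl⟩
    simp [exponent, ne_of_mem_of_not_mem hw hv]
  have : Nontrivial (ZMod (𝔭 v)) := ZMod.nontrivial_iff.2 h𝔭
  intro hmem
  simpa [exponent] using hle hmem

theorem of_ne_one {v : V} (h𝔭 : 𝔭 v ≠ 1) : (of v : GraphProduct Γ 𝔭) ≠ 1 :=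
  fun h => of_notMem_closure (Set.notMem_empty v) h𝔭 (h ▸ one_mem _)

theorem of_ne_of {v w : V} (hvw : v ≠ w) (h𝔭 : 𝔭 v ≠ 1) : (of v : GraphProduct Γ 𝔭) ≠ of w := by
  intro h
  refine of_notMem_closure (Γ := Γ) (S := {w}) hvw h𝔭 ?_
  rw [h]
  exact Subgroup.subset_closure (Set.mem_image_of_mem of rfl)

theorem of_mul_of_ne_one {v w : V} (hvw : v ≠ w) (h𝔭 : 𝔭 v ≠ 1) :
    (of v * of w : GraphProduct Γ 𝔭) ≠ 1 := by
  intro h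
  refine of_notMem_closure (Γ := Γ) (S := {w}) hvw h𝔭 ?_
  rw [eq_inv_of_mul_eq_one_left h]
  exact inv_mem (Subgroup.subset_closure (Set.mem_image_of_mem of rfl))

open Classical in
/-- The retraction of a graph product onto the subgroup generated by the vertices in `S`, which
kills all other vertices. -/
noncomputable def retract (S : Set V) : GraphProduct Γ 𝔭 →* GraphProduct Γ 𝔭 :=
  lift (fun v => if v ∈ S then of v else 1)
    (fun v => by split_ifs <;> simp [of_pow])
    (fun v w h => by split_ifs <;> simp [commute_of h])

theorem retract_eq_self {S : Set V} {g : GraphProduct Γ 𝔭}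
    (hg : g ∈ Subgroup.closure (of '' S)) : retract S g = g := by
  have hfix : Set.EqOn (retract S) (MonoidHom.id (GraphProduct Γ 𝔭)) (of '' S) := by
    rintro _ ⟨v, hv, rfl⟩
    simp [retract, hv]
  exact MonoidHom.eqOn_closure hfix hg

theorem closure_of_image_inter (S T : Set V) :
    Subgroup.closure (of '' (S ∩ T) : Set (GraphProduct Γ 𝔭)) =
      Subgroup.closure (of '' S) ⊓ Subgroup.closure (of '' T) := by
  refine le_antisymm (le_inf (Subgroup.closure_mono ?_) (Subgroup.closure_mono ?_)) ?_
  · exact Set.image_mono Set.inter_subset_left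
  · exact Set.image_mono Set.inter_subset_right
  rintro g ⟨hS, hT⟩
  have hle : Subgroup.closure (of '' T : Set (GraphProduct Γ 𝔭)) ≤
      (Subgroup.closure (of '' (S ∩ T))).comap (retract S) := by
    rw [Subgroup.closure_le]
    rintro _ ⟨v, hvT, rfl⟩
    by_cases hvS : v ∈ S
    · simpa [retract, hvS] using
        Subgroup.subset_closure (Set.mem_image_of_mem of (Set.mem_inter hvS hvT))
    · simp [retract, hvS, one_mem]
  exact retract_eq_self hS ▸ hle hT

theorem exists_finset_mem_closure (g : GraphProduct Γ 𝔭) :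
    ∃ F : Finset V, g ∈ Subgroup.closure (of '' (F : Set V)) := by
  classical
  have hg : g ∈ Subgroup.closure (Set.range of) :=
    PresentedGroup.closure_range_of (graphProdRels Γ 𝔭) ▸ Subgroup.mem_top g
  induction hg using Subgroup.closure_induction with
  | mem _ h =>
    obtain ⟨v, rfl⟩ := h
    exact ⟨{v}, Subgroup.subset_closure (Set.mem_image_of_mem of (by simp))⟩
  | one => exact ⟨∅, one_mem _⟩
  | mul _ _ _ _ hx hy =>
    obtain ⟨E, hE⟩ := hx
    obtain ⟨F, hF⟩ := hy
    refine ⟨E ∪ F, mul_mem (Subgroup.closure_mono ?_ hE) (Subgroup.closure_mono ?_ hF)⟩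
    · exact Set.image_mono (by simp)
    · exact Set.image_mono (by simp)
  | inv _ _ hx =>
    obtain ⟨F, hF⟩ := hx
    exact ⟨F, inv_mem hF⟩

theorem mem_closure_sp (g : GraphProduct Γ 𝔭) : g ∈ Subgroup.closure (of '' sp g) := by
  classical
  obtain ⟨F, hgF, hmin⟩ := exists_minimal_of_wellFoundedLT _ (exists_finset_mem_closure g)
  refine Subgroup.closure_mono (Set.image_mono fun v hv A hgA => ?_) hgF
  have hg : g ∈ Subgroup.closure (of '' (({w ∈ F | w ∈ A} : Finset V) : Set V)) := by
    have hcoe : (({w ∈ F | w ∈ A} : Finset V) : Set V) = ↑F ∩ A := by ext; simp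
    rw [hcoe, closure_of_image_inter]
    exact ⟨hgF, hgA⟩
  exact (Finset.mem_filter.1 (hmin hg (Finset.filter_subset _ _) hv)).2

section SplitHom

variable {S T : Set V} (φ ψ : GraphProduct Γ 𝔭 →* H) (hST : ∀ s ∈ S, ∀ t ∈ T, ¬ Γ.Adj s t)

open Classical in
/-- For sets `S` and `T` of vertices with no edge between them, the homomorphism that agrees with
`φ` on the vertices in `S` and with `ψ` on those in `T`, and kills all others. The set `S` takes
precedence on `S ∩ T`. -/
noncomputable def splitHom : GraphProduct Γ 𝔭 →* H :=
  lift
    (fun v => if v ∈ S then φ (of v) else if v ∈ T then ψ (of v) else 1)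
    (fun v => by split_ifs <;> simp [← map_pow, of_pow])
    (fun v w h => by
      split_ifs with hvS hwS hwT hvT hwS hwT
      · exact (commute_of h).map φ
      · exact absurd h (hST v hvS w hwT)
      · exact .one_right _
      · exact absurd h.symm (hST w hwS v hvT)
      · exact (commute_of h).map ψ
      · exact .one_right _
      all_goals exact .one_left _)

theorem splitHom_of_mem_left {v : V} (hv : v ∈ S) : splitHom φ ψ hST (of v) = φ (of v) := by
  simp [splitHom, hv]

theorem splitHom_of_mem_right {v : V} (hvS : v ∉ S) (hvT : v ∈ T) :
    splitHom φ ψ hST (of v) = ψ (of v) := by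
  simp [splitHom, hvS, hvT]

theorem splitHom_of_notMem {v : V} (hvS : v ∉ S) (hvT : v ∉ T) : splitHom φ ψ hST (of v) = 1 := by
  simp [splitHom, hvS, hvT]

theorem splitHom_mem_range {A : Set V} (hA : Disjoint A T) {g : GraphProduct Γ 𝔭}
    (hg : g ∈ Subgroup.closure (of '' A)) : splitHom φ ψ hST g ∈ φ.range := by
  suffices hle : Subgroup.closure (of '' A) ≤ φ.range.comap (splitHom φ ψ hST) from hle hg
  rw [Subgroup.closure_le]
  rintro _ ⟨v, hvA, rfl⟩
  by_cases hvS : v ∈ S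
  · exact ⟨of v, (splitHom_of_mem_left φ ψ hST hvS).symm⟩
  · exact ⟨1, by rw [splitHom_of_notMem φ ψ hST hvS (hA.notMem_of_mem_left hvA), map_one]⟩

end SplitHom

end GraphProduct

open GraphProduct Monoid in
theorem stmt_5_general {V : Type} (Γ : SimpleGraph V) (𝔭 : V → ℕ) (g : GraphProduct Γ 𝔭)
    (a b₁ b₂ b₃ b₄ : V) (h𝔭a : 𝔭 a ≠ 1) (h𝔭₂ : 𝔭 b₂ ≠ 1) (h𝔭₄ : 𝔭 b₄ ≠ 1)
    (hab₂ : a ≠ b₂) (hab₄ : a ≠ b₄) (h₂₄ : b₂ ≠ b₄)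
    (hb₁ : b₁ ∉ ({a, b₂, b₄} : Set V)) (hb₃ : b₃ ∉ ({a, b₂, b₄} : Set V))
    (hadj₂ : ¬ Γ.Adj a b₂) (hadj₄ : ¬ Γ.Adj a b₄) (hsp₂ : b₂ ∉ sp g) (hsp₄ : b₄ ∉ sp g)
    (n : ℕ) (hn : 2 ≤ n) :
    ¬ ∃ x : GraphProduct Γ 𝔭,
        x ^ n = g * (of a)⁻¹ * (of b₁)⁻¹ * of b₂ * of a * (of b₃)⁻¹ * of b₄ := by
  rintro ⟨x, hx⟩
  let copy (i : Bool) : GraphProduct Γ 𝔭 →* CoprodI fun _ : Bool => GraphProduct Γ 𝔭 :=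
    CoprodI.of (M := fun _ : Bool => GraphProduct Γ 𝔭) (i := i)
  let φ := splitHom (copy true) (copy false) (S := {a}) (T := {b₂, b₄}) (by simp [hadj₂, hadj₄])
  have hφa : φ (of a) = copy true (of a) := splitHom_of_mem_left _ _ _ rfl
  have hφ₂ : φ (of b₂) = copy false (of b₂) := splitHom_of_mem_right _ _ _ hab₂.symm (by simp)
  have hφ₄ : φ (of b₄) = copy false (of b₄) := splitHom_of_mem_right _ _ _ hab₄.symm (by simp)
  have hφ₁ : φ (of b₁) = 1 := splitHom_of_notMem _ _ _ (by grind) (by grind)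
  have hφ₃ : φ (of b₃) = 1 := splitHom_of_notMem _ _ _ (by grind) (by grind)
  obtain ⟨p, hp⟩ : φ g ∈ (copy true).range :=
    splitHom_mem_range _ _ _ (by simp [hsp₂, hsp₄]) (mem_closure_sp g)
  refine pow_ne_of_mul_of_mul_of_mul_of (i := true) (j := false) (by simp) (p * (of a)⁻¹)
    (of_ne_one h𝔭₂) (of_ne_one h𝔭a) (of_ne_one h𝔭₄) (of_ne_of h₂₄ h𝔭₂)
    (of_mul_of_ne_one h₂₄.symm h𝔭₄) hn (φ x) ?_
  rw [← map_pow, hx]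
  simp [hφa, hφ₁, hφ₂, hφ₃, hφ₄, ← hp, copy]

theorem stmt_5 {V : Type} (Γ : SimpleGraph V) (𝔭 : V → ℕ)
    (h𝔭 : ∀ v, 𝔭 v = 0 ∨ IsPrimePow (𝔭 v))
    (g : GraphProduct Γ 𝔭) (a b₁ b₂ b₃ b₄ : V)
    (hdist : [a, b₁, b₂, b₃, b₄].Nodup)
    (hadj : ¬ Γ.Adj a b₁ ∧ ¬ Γ.Adj a b₂ ∧ ¬ Γ.Adj a b₃ ∧ ¬ Γ.Adj a b₄)
    (hsp : b₁ ∉ GraphProduct.sp g ∧ b₂ ∉ GraphProduct.sp g ∧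
           b₃ ∉ GraphProduct.sp g ∧ b₄ ∉ GraphProduct.sp g)
    (n : ℕ) (hn : 2 ≤ n) :
    ¬ ∃ x : GraphProduct Γ 𝔭,
        x ^ n = g * (GraphProduct.of a)⁻¹ * (GraphProduct.of b₁)⁻¹ * GraphProduct.of b₂ *
          GraphProduct.of a * (GraphProduct.of b₃)⁻¹ * GraphProduct.of b₄ := by
  have hne_one (v : V) : 𝔭 v ≠ 1 := (h𝔭 v).elim (by lia) IsPrimePow.ne_one
  exact stmt_5_general Γ 𝔭 g a b₁ b₂ b₃ b₄ (hne_one a) (hne_one b₂) (hne_one b₄) (by grind)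
    (by grind) (by grind) (by grind) (by grind) hadj.2.1 hadj.2.2.2 hsp.2.1 hsp.2.2.2 n hn
end

section
/- In the graph product of cyclic groups G(Γ, 𝔭), if the word a₁^{α₁}⋯a_k^{α_k} (with consecutive letters distinct and each α_i a nonzero integer not annihilating a_i) spells an element g and is not reduced, then there exist 1 ≤ p < q ≤ k such that a_p = a_q and a_p is adjacent in Γ to each of the vertices a_{p+1}, a_{p+2}, …, a_{q−1}. -/
/-- A word in the alphabet `V`: a list of syllables `(vertex, exponent)` with consecutive
vertices distinct and each exponent a nonzero integer not annihilating its vertex. -/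
def IsWord {V : Type} (Γ : SimpleGraph V) (𝔭 : V → ℕ) (l : List (V × ℤ)) : Prop :=
  l.Chain' (fun s s' => s.1 ≠ s'.1) ∧
    ∀ s ∈ l, s.2 ≠ 0 ∧ (𝔭 s.1 ≠ 0 → ¬ ((𝔭 s.1 : ℤ) ∣ s.2))

/-- The element of the graph product spelled by a word. -/
def spells {V : Type} (Γ : SimpleGraph V) (𝔭 : V → ℕ) (l : List (V × ℤ)) :
    GraphProduct Γ 𝔭 :=
  (l.map fun s => GraphProduct.of s.1 ^ s.2).prod

/-!
Following van der Waerden, the graph product acts on the set of normal forms: lists of nontrivial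
syllables, no two of which can be merged after swapping adjacent vertices, taken up to such swaps.
For each vertex `v` a normal form factors uniquely as a (possibly trivial) `v`-syllable followed by
a normal form in which no `v`-syllable can be moved to the front, and the vertex group acts on the
first factor. The action of the element spelled by a word `l'` takes the empty normal form to one
with at most `l'.length` syllables, whereas a word `l` without mergeable syllables takes it to `l`
itself. Hence `l` is no longer than any word that spells the same element.
-/

/-- A single exchange of neighbouring letters related by `r`, at any position of a list. -/
inductive MazurkiewiczTrace.Swap {α : Type*} (r : α → α → Prop) : List α → List α → Prop
  | head {a b : α} (h : r a b) (l : List α) : Swap r (a :: b :: l) (b :: a :: l)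
  | cons (a : α) {l l' : List α} (h : Swap r l l') : Swap r (a :: l) (a :: l')

/-- Lists over `α` up to exchanging neighbouring letters related by `r`: the elements of the free
partially commutative monoid with independence relation `r`. -/
def MazurkiewiczTrace {α : Type*} (r : α → α → Prop) : Type _ :=
  Quot (MazurkiewiczTrace.Swap r)

namespace MazurkiewiczTrace

variable {α : Type*} {r : α → α → Prop} {a b : α}

/-- The trace represented by a list. -/
def ofList (l : List α) : MazurkiewiczTrace r := Quot.mk _ l

/-- The empty trace. -/
def nil : MazurkiewiczTrace r := ofList []

/-- The trace obtained by prepending a letter. -/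
def cons (a : α) : MazurkiewiczTrace r → MazurkiewiczTrace r :=
  Quot.map (List.cons a) fun _ _ => Swap.cons a

lemma ofList_cons (a : α) (l : List α) :
    (ofList (a :: l) : MazurkiewiczTrace r) = cons a (ofList l) := rfl

lemma cons_comm (h : r a b) (t : MazurkiewiczTrace r) : cons a (cons b t) = cons b (cons a t) := by
  induction t using Quot.ind with
  | mk l => exact Quot.sound (.head h l)

@[elab_as_elim]
lemma induction {motive : MazurkiewiczTrace r → Prop} (nil : motive nil)
    (cons : ∀ a t, motive t → motive (cons a t)) (t : MazurkiewiczTrace r) : motive t := by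
  induction t using Quot.ind with
  | mk l =>
    induction l with
    | nil => exact nil
    | cons a l ih => exact cons a _ ih

section Elim

variable {β : Type*} (init : β) (step : α → MazurkiewiczTrace r → β → β)
  (step_comm : ∀ ⦃a b⦄, r a b → ∀ t x,
    step a (cons b t) (step b t x) = step b (cons a t) (step a t x))

/-- Definition of a function on traces by primitive recursion: `step a t x` is the value at
`cons a t` when `x` is the value at `t`. -/
def elim : MazurkiewiczTrace r → β :=
  Quot.lift (List.rec init fun a l x => step a (ofList l) x) fun l l' h => by
    induction h with
    | head h l => exact step_comm h (ofList l) _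
    | cons a h ih => exact congrArg₂ (step a) (Quot.sound h) ih

lemma elim_nil : elim init step step_comm nil = init := rfl

lemma elim_cons (a : α) (t : MazurkiewiczTrace r) :
    elim init step step_comm (cons a t) = step a t (elim init step step_comm t) := by
  induction t using Quot.ind with
  | mk l => rfl

end Elim

/-- The number of letters of a trace. -/
def length : MazurkiewiczTrace r → ℕ := elim 0 (fun _ _ n => n + 1) fun _ _ _ _ _ => rfl

@[simp] lemma length_nil : (nil : MazurkiewiczTrace r).length = 0 := rfl

@[simp] lemma length_cons (a : α) (t : MazurkiewiczTrace r) : (cons a t).length = t.length + 1 :=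
  elim_cons ..

@[simp] lemma length_ofList (l : List α) : (ofList l : MazurkiewiczTrace r).length = l.length := by
  induction l with
  | nil => rfl
  | cons a l ih => rw [ofList_cons, length_cons, ih, List.length_cons]

end MazurkiewiczTrace

namespace GraphProduct

section NormalForms

variable {V : Type*} {Γ : SimpleGraph V} {M : V → Type*} {v w : V}

/-- Lists of syllables from the vertex groups `M v`, up to exchanging neighbouring syllables at
adjacent vertices. -/
abbrev SyllableTrace (Γ : SimpleGraph V) (M : V → Type*) : Type _ :=
  MazurkiewiczTrace fun s t : Σ v, M v => Γ.Adj s.1 t.1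

open MazurkiewiczTrace (nil cons elim elim_nil elim_cons cons_comm)

lemma cons_comm_of_adj (h : Γ.Adj v w) (x : M v) (y : M w) (t : SyllableTrace Γ M) :
    cons ⟨v, x⟩ (cons ⟨w, y⟩ t) = cons ⟨w, y⟩ (cons ⟨v, x⟩ t) :=
  cons_comm (a := ⟨v, x⟩) (b := ⟨w, y⟩) h t

variable [∀ v, One (M v)]

open Classical in
/-- The `v`-syllable that can be moved to the front of a trace, or `1` if there is none, together
with the rest of the trace. -/
noncomputable def extract (v : V) : SyllableTrace Γ M → M v × SyllableTrace Γ M :=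
  elim (1, nil)
    (fun s t p =>
      if h : s.1 = v then (h ▸ s.2, t)
      else if Γ.Adj v s.1 then (p.1, cons s p.2)
      else (1, cons s t))
    (by
      rintro ⟨a, x⟩ ⟨b, y⟩ (hab : Γ.Adj a b) t p
      by_cases ha : a = v
      · subst ha
        simp [hab, hab.ne']
      by_cases hb : b = v
      · subst hb
        simp [hab.symm, hab.ne]
      by_cases hva : Γ.Adj v a <;> by_cases hvb : Γ.Adj v b <;>
        simp [ha, hb, hva, hvb, cons_comm_of_adj hab])

lemma extract_nil (v : V) : extract v (nil : SyllableTrace Γ M) = (1, nil) := elim_nil ..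

lemma extract_cons_self (x : M v) (t : SyllableTrace Γ M) : extract v (cons ⟨v, x⟩ t) = (x, t) := by
  simp [extract, elim_cons]

lemma extract_cons_of_adj (h : Γ.Adj v w) (y : M w) (t : SyllableTrace Γ M) :
    extract v (cons ⟨w, y⟩ t) = ((extract v t).1, cons ⟨w, y⟩ (extract v t).2) := by
  simp [extract, elim_cons, h, h.ne']

lemma extract_cons_of_not_adj (hne : w ≠ v) (h : ¬ Γ.Adj v w) (y : M w) (t : SyllableTrace Γ M) :
    extract v (cons ⟨w, y⟩ t) = (1, cons ⟨w, y⟩ t) := by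
  simp [extract, elim_cons, h, hne]

/-- No syllable of the trace is trivial, and no two syllables at the same vertex can be moved next
to each other. -/
def IsReduced : SyllableTrace Γ M → Prop :=
  elim True (fun s t P => s.2 ≠ 1 ∧ (extract s.1 t).1 = 1 ∧ P) (by
    rintro ⟨a, x⟩ ⟨b, y⟩ (hab : Γ.Adj a b) t P
    simp only [extract_cons_of_adj hab, extract_cons_of_adj hab.symm]
    exact propext (by tauto))

lemma isReduced_nil : IsReduced (nil : SyllableTrace Γ M) := trivial

lemma isReduced_cons {s : Σ v, M v} {t : SyllableTrace Γ M} :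
    IsReduced (cons s t) ↔ s.2 ≠ 1 ∧ (extract s.1 t).1 = 1 ∧ IsReduced t :=
  iff_of_eq (elim_cons ..)

open Classical in
/-- Prepend a syllable to a trace unless it is trivial. -/
noncomputable def consSyllable (v : V) (x : M v) (t : SyllableTrace Γ M) : SyllableTrace Γ M :=
  if x = 1 then t else cons ⟨v, x⟩ t

@[simp] lemma consSyllable_one (t : SyllableTrace Γ M) : consSyllable v 1 t = t := if_pos rfl

lemma consSyllable_of_ne_one {x : M v} (hx : x ≠ 1) (t : SyllableTrace Γ M) :
    consSyllable v x t = cons ⟨v, x⟩ t := if_neg hx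

lemma consSyllable_comm (h : Γ.Adj v w) (x : M v) (y : M w) (t : SyllableTrace Γ M) :
    consSyllable v x (consSyllable w y t) = consSyllable w y (consSyllable v x t) := by
  unfold consSyllable
  split_ifs <;> first | rfl | exact cons_comm_of_adj h x y t

lemma length_le_length_consSyllable (x : M v) (t : SyllableTrace Γ M) :
    t.length ≤ (consSyllable v x t).length := by
  unfold consSyllable
  split_ifs <;> simp

lemma length_consSyllable_le (x : M v) (t : SyllableTrace Γ M) :
    (consSyllable v x t).length ≤ t.length + 1 := by
  unfold consSyllable
  split_ifs <;> simp

lemma fst_extract_consSyllable_of_adj (h : Γ.Adj v w) (y : M w) (t : SyllableTrace Γ M) :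
    (extract v (consSyllable w y t)).1 = (extract v t).1 := by
  unfold consSyllable
  split_ifs
  · rfl
  · rw [extract_cons_of_adj h]

namespace IsReduced

variable {t : SyllableTrace Γ M}

lemma consSyllable (ht : IsReduced t) (hv : (extract v t).1 = 1) (x : M v) :
    IsReduced (consSyllable v x t) := by
  by_cases hx : x = 1
  · rwa [hx, consSyllable_one]
  · rw [consSyllable_of_ne_one hx]
    exact isReduced_cons.2 ⟨hx, hv, ht⟩

lemma extract_eq_self (ht : IsReduced t) (hv : (extract v t).1 = 1) :
    extract v t = (1, t) := by
  induction t using MazurkiewiczTrace.induction with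
  | nil => exact extract_nil v
  | cons s t ih =>
    obtain ⟨w, y⟩ := s
    obtain ⟨hy, -, ht⟩ := isReduced_cons.1 ht
    by_cases hwv : w = v
    · subst hwv
      rw [extract_cons_self] at hv
      exact absurd hv hy
    by_cases hadj : Γ.Adj v w
    · rw [extract_cons_of_adj hadj] at hv ⊢
      rw [ih ht hv]
    · exact extract_cons_of_not_adj hwv hadj y t

lemma extract_consSyllable (ht : IsReduced t) (hv : (extract v t).1 = 1) (x : M v) :
    extract v (GraphProduct.consSyllable v x t) = (x, t) := by
  by_cases hx : x = 1
  · rw [hx, consSyllable_one, ht.extract_eq_self hv]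
  · rw [consSyllable_of_ne_one hx, extract_cons_self]

lemma exists_consSyllable_eq (ht : IsReduced t) (v : V) :
    ∃ (x : M v) (t' : SyllableTrace Γ M), IsReduced t' ∧ (extract v t').1 = 1 ∧
      GraphProduct.consSyllable v x t' = t := by
  induction t using MazurkiewiczTrace.induction with
  | nil => exact ⟨1, nil, isReduced_nil, by rw [extract_nil], consSyllable_one _⟩
  | cons s t ih =>
    obtain ⟨w, y⟩ := s
    obtain ⟨hy, hw, htail⟩ := isReduced_cons.1 ht
    by_cases hwv : w = v
    · subst hwv
      exact ⟨y, t, htail, hw, consSyllable_of_ne_one hy t⟩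
    by_cases hadj : Γ.Adj v w
    · obtain ⟨x, t', ht', hv, rfl⟩ := ih htail
      rw [fst_extract_consSyllable_of_adj hadj.symm] at hw
      refine ⟨x, cons ⟨w, y⟩ t', isReduced_cons.2 ⟨hy, hw, ht'⟩, ?_, ?_⟩
      · rw [extract_cons_of_adj hadj, hv]
      · simpa only [consSyllable_of_ne_one hy] using consSyllable_comm hadj x y t'
    · exact ⟨1, _, ht, by rw [extract_cons_of_not_adj hwv hadj], consSyllable_one _⟩

end IsReduced

/-- Normal forms of the elements of the graph product of the groups `M v`. -/
abbrev NormalForm (Γ : SimpleGraph V) (M : V → Type*) [∀ v, One (M v)] : Type _ :=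
  {t : SyllableTrace Γ M // IsReduced t}

namespace NormalForm

/-- The normal form without syllables. -/
def empty : NormalForm Γ M := ⟨nil, isReduced_nil⟩

variable (Γ M) in
/-- The normal forms in which no `v`-syllable can be moved to the front. -/
abbrev Tail (v : V) : Type _ := {t : SyllableTrace Γ M // IsReduced t ∧ (extract v t).1 = 1}

/-- The normal form with given `v`-syllable and given tail. -/
noncomputable def ofPair (v : V) (p : M v × Tail Γ M v) : NormalForm Γ M :=
  ⟨consSyllable v p.1 p.2.1, p.2.2.1.consSyllable p.2.2.2 p.1⟩

lemma ofPair_bijective (v : V) :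
    Function.Bijective (ofPair v : M v × Tail Γ M v → NormalForm Γ M) := by
  constructor
  · rintro ⟨x, t, ht, hv⟩ ⟨y, u, hu, hv'⟩ h
    have hxy : (x, t) = (y, u) := by
      rw [← ht.extract_consSyllable hv x, ← hu.extract_consSyllable hv' y]
      exact congrArg (extract v) (congrArg Subtype.val h)
    obtain ⟨rfl, rfl⟩ := Prod.mk.inj hxy
    rfl
  · rintro ⟨t, ht⟩
    obtain ⟨x, u, hu, hv, h⟩ := ht.exists_consSyllable_eq v
    exact ⟨(x, ⟨u, hu, hv⟩), Subtype.ext h⟩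

variable (Γ M) in
/-- The unique factorization of normal forms into a `v`-syllable and a tail. -/
noncomputable def pairEquiv (v : V) : M v × Tail Γ M v ≃ NormalForm Γ M :=
  Equiv.ofBijective (ofPair v) (ofPair_bijective v)

end NormalForm

end NormalForms

namespace NormalForm

section VertexAction

variable {V : Type*} {Γ : SimpleGraph V} {M : V → Type*} [∀ v, Group (M v)] {v w : V}

open MazurkiewiczTrace (cons)

variable (Γ M) in
/-- The action of a vertex group on normal forms, by left multiplication on the first factor of
`pairEquiv`. -/
noncomputable def vertexAction (v : V) : M v →* Equiv.Perm (NormalForm Γ M) where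
  toFun x := (pairEquiv Γ M v).permCongr ((Equiv.mulLeft x).prodCongr (Equiv.refl _))
  map_one' := by
    ext1 n
    simp
  map_mul' x y := by
    ext1 n
    simp [Prod.map]

lemma vertexAction_pairEquiv (x y : M v) (t : Tail Γ M v) :
    vertexAction Γ M v x (pairEquiv Γ M v (y, t)) = pairEquiv Γ M v (x * y, t) := by
  simp [vertexAction]

lemma coe_vertexAction {n : NormalForm Γ M} {y : M v} {t : SyllableTrace Γ M} (ht : IsReduced t)
    (hv : (extract v t).1 = 1) (hn : n.1 = consSyllable v y t) (x : M v) :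
    (vertexAction Γ M v x n).1 = consSyllable v (x * y) t := by
  obtain rfl : n = pairEquiv Γ M v (y, ⟨t, ht, hv⟩) := Subtype.ext hn
  rw [vertexAction_pairEquiv]
  rfl

lemma vertexAction_comm (h : Γ.Adj v w) (x : M v) (y : M w) :
    Commute (vertexAction Γ M v x) (vertexAction Γ M w y) := by
  ext n : 2
  obtain ⟨x₀, t, ht, htv, hn⟩ := n.2.exists_consSyllable_eq v
  obtain ⟨y₀, u, hu, huw, rfl⟩ := ht.exists_consSyllable_eq w
  have hv (y' : M w) : (extract v (consSyllable w y' u)).1 = 1 := by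
    rwa [fst_extract_consSyllable_of_adj h] at htv ⊢
  have hw (x' : M v) : (extract w (consSyllable v x' u)).1 = 1 := by
    rwa [fst_extract_consSyllable_of_adj h.symm]
  have huv : (extract v u).1 = 1 := by simpa only [consSyllable_one] using hv 1
  have hxn : (vertexAction Γ M v x n).1 = consSyllable w y₀ (consSyllable v (x * x₀) u) := by
    rw [coe_vertexAction ht (hv y₀) hn.symm, consSyllable_comm h]
  have hyn : (vertexAction Γ M w y n).1 = consSyllable v x₀ (consSyllable w (y * y₀) u) := by
    rw [consSyllable_comm h] at hn ⊢
    exact coe_vertexAction (hu.consSyllable huv x₀) (hw x₀) hn.symm y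
  calc (vertexAction Γ M v x (vertexAction Γ M w y n)).1
    _ = consSyllable v (x * x₀) (consSyllable w (y * y₀) u) :=
      coe_vertexAction (hu.consSyllable huw _) (hv _) hyn x
    _ = consSyllable w (y * y₀) (consSyllable v (x * x₀) u) := consSyllable_comm h ..
    _ = (vertexAction Γ M w y (vertexAction Γ M v x n)).1 :=
      (coe_vertexAction (hu.consSyllable huv _) (hw _) hxn y).symm

lemma length_vertexAction_le (x : M v) (n : NormalForm Γ M) :
    (vertexAction Γ M v x n).1.length ≤ n.1.length + 1 := by
  obtain ⟨y, t, ht, hv, hn⟩ := n.2.exists_consSyllable_eq v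
  rw [coe_vertexAction ht hv hn.symm, ← hn]
  exact (length_consSyllable_le _ t).trans (Nat.succ_le_succ (length_le_length_consSyllable y t))

lemma vertexAction_of_isReduced_cons {s : Σ v, M v} {t : SyllableTrace Γ M}
    (h : IsReduced (cons s t)) :
    vertexAction Γ M s.1 s.2 ⟨t, (isReduced_cons.1 h).2.2⟩ = ⟨cons s t, h⟩ := by
  obtain ⟨hs, hv, ht⟩ := isReduced_cons.1 h
  ext1
  rw [coe_vertexAction ht hv (consSyllable_one t).symm, mul_one, consSyllable_of_ne_one hs]

end VertexAction

end NormalForm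

section Words

open MazurkiewiczTrace (ofList cons)

variable {V : Type} {Γ : SimpleGraph V} {𝔭 : V → ℕ}

variable (𝔭) in
/-- The vertex groups of a graph product of cyclic groups, with `ZMod 0 = ℤ` for the infinite
ones. -/
abbrev VertexGroup (v : V) : Type := Multiplicative (ZMod (𝔭 v))

variable (Γ 𝔭) in
/-- The action of a graph product of cyclic groups on normal forms. -/
noncomputable def normalFormAction :
    GraphProduct Γ 𝔭 →* Equiv.Perm (NormalForm Γ (VertexGroup 𝔭)) :=
  PresentedGroup.toGroup
    (f := fun v => NormalForm.vertexAction Γ (VertexGroup 𝔭) v (Multiplicative.ofAdd 1)) <| by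
    rintro r (⟨v, -, rfl⟩ | ⟨a, b, hab, rfl⟩)
    · rw [map_pow, FreeGroup.lift_apply_of, ← map_pow, ← ofAdd_nsmul, nsmul_one,
        ZMod.natCast_self, ofAdd_zero, map_one]
    · simp only [map_mul, map_inv, FreeGroup.lift_apply_of]
      rw [mul_inv_eq_one, mul_inv_eq_iff_eq_mul]
      exact NormalForm.vertexAction_comm hab _ _

lemma normalFormAction_of_zpow (v : V) (n : ℤ) :
    normalFormAction Γ 𝔭 (GraphProduct.of v ^ n) =
      NormalForm.vertexAction Γ (VertexGroup 𝔭) v (Multiplicative.ofAdd (n : ZMod (𝔭 v))) := by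
  have hof : normalFormAction Γ 𝔭 (GraphProduct.of v) =
      NormalForm.vertexAction Γ (VertexGroup 𝔭) v (Multiplicative.ofAdd 1) :=
    PresentedGroup.toGroup.of _
  rw [map_zpow, hof, ← map_zpow, ← ofAdd_zsmul, zsmul_one]

variable (𝔭) in
/-- A syllable with integer exponent, with its exponent read in the vertex group. -/
def toSyllable (s : V × ℤ) : Σ v, VertexGroup 𝔭 v :=
  ⟨s.1, Multiplicative.ofAdd (s.2 : ZMod (𝔭 s.1))⟩

variable (Γ 𝔭) in
/-- The trace of syllables underlying a word. -/
def wordTrace (l : List (V × ℤ)) : SyllableTrace Γ (VertexGroup 𝔭) :=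
  ofList (l.map (toSyllable 𝔭))

lemma wordTrace_cons (s : V × ℤ) (l : List (V × ℤ)) :
    wordTrace Γ 𝔭 (s :: l) = cons (toSyllable 𝔭 s) (wordTrace Γ 𝔭 l) := rfl

lemma length_wordTrace (l : List (V × ℤ)) : (wordTrace Γ 𝔭 l).length = l.length := by
  simp [wordTrace]

lemma normalFormAction_spells_cons (s : V × ℤ) (l : List (V × ℤ))
    (n : NormalForm Γ (VertexGroup 𝔭)) :
    normalFormAction Γ 𝔭 (spells Γ 𝔭 (s :: l)) n =
      NormalForm.vertexAction Γ _ s.1 (toSyllable 𝔭 s).2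
        (normalFormAction Γ 𝔭 (spells Γ 𝔭 l) n) := by
  rw [spells, List.map_cons, List.prod_cons, map_mul, Equiv.Perm.mul_apply,
    normalFormAction_of_zpow]
  rfl

lemma length_normalFormAction_spells_le (l : List (V × ℤ)) :
    (normalFormAction Γ 𝔭 (spells Γ 𝔭 l) NormalForm.empty).1.length ≤ l.length := by
  induction l with
  | nil => simp [spells, NormalForm.empty]
  | cons s l ih =>
    rw [normalFormAction_spells_cons]
    exact (NormalForm.length_vertexAction_le _ _).trans (Nat.succ_le_succ ih)

lemma normalFormAction_spells_of_isReduced {l : List (V × ℤ)} (hl : IsReduced (wordTrace Γ 𝔭 l)) :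
    normalFormAction Γ 𝔭 (spells Γ 𝔭 l) NormalForm.empty = ⟨wordTrace Γ 𝔭 l, hl⟩ := by
  induction l with
  | nil =>
    rw [spells, List.map_nil, List.prod_nil, map_one]
    rfl
  | cons s l ih =>
    have hcons : IsReduced (cons (toSyllable 𝔭 s) (wordTrace Γ 𝔭 l)) := hl
    rw [normalFormAction_spells_cons, ih (isReduced_cons.1 hcons).2.2]
    exact NormalForm.vertexAction_of_isReduced_cons hcons

lemma length_le_of_spells_eq_of_isReduced {l l' : List (V × ℤ)} (hl : IsReduced (wordTrace Γ 𝔭 l))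
    (h : spells Γ 𝔭 l' = spells Γ 𝔭 l) : l.length ≤ l'.length := by
  have hle := length_normalFormAction_spells_le (Γ := Γ) (𝔭 := 𝔭) l'
  rwa [h, normalFormAction_spells_of_isReduced hl, length_wordTrace] at hle

lemma exists_get_of_extract_ne_one {v : V} {l : List (V × ℤ)}
    (h : (extract v (wordTrace Γ 𝔭 l)).1 ≠ 1) :
    ∃ q : Fin l.length, v = (l.get q).1 ∧ ∀ r : Fin l.length, r < q → Γ.Adj v (l.get r).1 := by
  induction l with
  | nil => exact absurd (congrArg Prod.fst (extract_nil v)) h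
  | cons s l ih =>
    by_cases hs : s.1 = v
    · exact ⟨⟨0, by simp⟩, hs.symm, fun r hr => absurd hr (Nat.not_lt_zero _)⟩
    by_cases hadj : Γ.Adj v s.1
    · rw [wordTrace_cons, toSyllable, extract_cons_of_adj hadj] at h
      obtain ⟨q, hq, hlt⟩ := ih h
      exact ⟨q.succ, hq, Fin.cases (fun _ => hadj) fun r hr => hlt r (Fin.succ_lt_succ_iff.1 hr)⟩
    · rw [wordTrace_cons, toSyllable, extract_cons_of_not_adj hs hadj] at h
      exact absurd rfl h

lemma exists_get_eq_get_of_not_isReduced {l : List (V × ℤ)}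
    (hne : ∀ s ∈ l, (toSyllable 𝔭 s).2 ≠ 1) (hl : ¬ IsReduced (wordTrace Γ 𝔭 l)) :
    ∃ p q : Fin l.length, p < q ∧ (l.get p).1 = (l.get q).1 ∧
      ∀ r : Fin l.length, p < r → r < q → Γ.Adj (l.get p).1 (l.get r).1 := by
  induction l with
  | nil => exact absurd isReduced_nil hl
  | cons s l ih =>
    obtain ⟨hs, hne⟩ := List.forall_mem_cons.1 hne
    by_cases hl' : IsReduced (wordTrace Γ 𝔭 l)
    · have hextract : (extract s.1 (wordTrace Γ 𝔭 l)).1 ≠ 1 := fun h =>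
        hl (isReduced_cons.2 ⟨hs, h, hl'⟩)
      obtain ⟨q, hq, hlt⟩ := exists_get_of_extract_ne_one hextract
      exact ⟨⟨0, by simp⟩, q.succ, Fin.succ_pos q, hq, Fin.cases (fun h => absurd h (lt_irrefl _))
        fun r _ hr => hlt r (Fin.succ_lt_succ_iff.1 hr)⟩
    · obtain ⟨p, q, hpq, heq, hbetween⟩ := ih hne hl'
      exact ⟨p.succ, q.succ, Fin.succ_lt_succ_iff.2 hpq, heq,
        Fin.cases (fun h => absurd h (Nat.not_lt_zero _)) fun r hpr hrq =>
          hbetween r (Fin.succ_lt_succ_iff.1 hpr) (Fin.succ_lt_succ_iff.1 hrq)⟩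

lemma toSyllable_snd_eq_one_iff {s : V × ℤ} :
    (toSyllable 𝔭 s).2 = 1 ↔ (𝔭 s.1 : ℤ) ∣ s.2 :=
  ZMod.intCast_zmod_eq_zero_iff_dvd _ _

lemma not_dvd_of_isWord {l : List (V × ℤ)} (hl : IsWord Γ 𝔭 l) :
    ∀ s ∈ l, ¬ (𝔭 s.1 : ℤ) ∣ s.2 := by
  intro s hs hdvd
  obtain ⟨hne, hndvd⟩ := hl.2 s hs
  by_cases hp : 𝔭 s.1 = 0
  · rw [hp, Nat.cast_zero, zero_dvd_iff] at hdvd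
    exact hne hdvd
  · exact hndvd hp hdvd

end Words

end GraphProduct

theorem stmt_17_general {V : Type} (Γ : SimpleGraph V) (𝔭 : V → ℕ) (l : List (V × ℤ))
    (hl : ∀ s ∈ l, ¬ (𝔭 s.1 : ℤ) ∣ s.2)
    (hshorter : ∃ l' : List (V × ℤ), spells Γ 𝔭 l' = spells Γ 𝔭 l ∧ l'.length < l.length) :
    ∃ p q : Fin l.length, p < q ∧ (l.get p).1 = (l.get q).1 ∧
      ∀ r : Fin l.length, p < r → r < q → Γ.Adj (l.get p).1 (l.get r).1 := by
  obtain ⟨l', hspells, hlt⟩ := hshorter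
  refine GraphProduct.exists_get_eq_get_of_not_isReduced (𝔭 := 𝔭)
    (fun s hs h => hl s hs (GraphProduct.toSyllable_snd_eq_one_iff.1 h)) fun hred => ?_
  exact hlt.not_ge (GraphProduct.length_le_of_spells_eq_of_isReduced hred hspells)

theorem stmt_17 {V : Type} (Γ : SimpleGraph V) (𝔭 : V → ℕ)
    (h𝔭 : ∀ v, 𝔭 v = 0 ∨ IsPrimePow (𝔭 v))
    (l : List (V × ℤ)) (hl : IsWord Γ 𝔭 l) (g : GraphProduct Γ 𝔭)
    (hg : spells Γ 𝔭 l = g)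
    (hnotreduced : ∃ l' : List (V × ℤ),
      IsWord Γ 𝔭 l' ∧ spells Γ 𝔭 l' = g ∧ l'.length < l.length) :
    ∃ p q : Fin l.length, p < q ∧ (l.get p).1 = (l.get q).1 ∧
      ∀ r : Fin l.length, p < r → r < q → Γ.Adj (l.get p).1 (l.get r).1 := by
  obtain ⟨l', -, hl', hlt⟩ := hnotreduced
  exact stmt_17_general Γ 𝔭 l (GraphProduct.not_dvd_of_isWord hl) ⟨l', hl'.trans hg.symm, hlt⟩
end
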